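/- Let w be the constant welfare basis function w(j) = 1 for all j, and define f*(j) = ((j−1)!/(e−1)) · (e − Σ_{i=0}^{j−1} 1/i!) for all j ≥ 1, where e is Euler's number. Then the price of anarchy over games with arbitrarily many agents equals 1 − 1/e: inf_{n ≥ 1} PoA(f*, w, n) = 1 − 1/e. In particular, since inf_{n ≥ 1} PoA(f^{es}, w, n) = 1/2 for f^{es}(j) = 1/j, the mechanism f* has a strictly larger price of anarchy than the budget-balanced mechanism f^{es}. -/

import Mathlib

/-!
The proof has three ingredients.

* **Existence of equilibria.** `RAGame.potential` is Rosenthal's potential: a unilateral deviation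
  changes it by exactly the change of the deviating agent's utility, so a maximiser over the
  finitely many allocations is a Nash equilibrium. This is needed because the infimum of an empty
  set of reals is `0`.
* **Lower bound.** The mechanism satisfies `f*(1) = 1` and `j f*(j) - f*(j+1) = 1/(e-1)`, and it is
  nonnegative and nonincreasing. Summing the equilibrium inequalities for the deviations
  to an optimal allocation, resource by resource, bounds the optimal welfare by
  `e/(e-1)` times the equilibrium welfare (`RAGame.welfare_le_of_nash`). The contribution of one
  resource is estimated in `resource_bound`.
* **Upper bounds.** In `crossGame`, agent `i` chooses between all the unit-value resources of the
  other agents, and the unit-value resource of its own together with a private resource of value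
  `c`. With `k` agents, if `f(k) + c f(1) ≤ (k-1) f(k-1)` then everybody choosing the former is an
  equilibrium, of welfare at most `k` against the optimum `k (1 + c)`. Taking `k = 2` and
  `c = 1/(e-1)` for `f*` gives `1 - 1/e`; taking `k = 3` and `c = 2/3` for equal shares gives
  `3/5 < 1 - 1/e`.
-/

/-- A resource allocation game with at most `n` agents: a finite resource set `R`,
a nonnegative value `v r` for each resource, `m ≤ n` agents, and for each agent a
nonempty finite collection of admissible choices (subsets of `R`). -/
structure RAGame (n : ℕ) where
  R : Type
  [fintypeR : Fintype R]
  [decEqR : DecidableEq R]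
  v : R → ℝ
  v_nonneg : ∀ r, 0 ≤ v r
  m : ℕ
  m_le : m ≤ n
  A : Fin m → Finset (Finset R)
  A_ne : ∀ i, (A i).Nonempty

attribute [instance] RAGame.fintypeR RAGame.decEqR

namespace RAGame

variable {n : ℕ}

/-- An allocation: each agent selects an admissible choice. -/
def Alloc (G : RAGame n) : Type := (i : Fin G.m) → {s : Finset G.R // s ∈ G.A i}

/-- `|a|_r`: the number of agents selecting resource `r` in allocation `a`. -/
def count (G : RAGame n) (a : G.Alloc) (r : G.R) : ℕ :=
  (Finset.univ.filter fun i => r ∈ (a i).val).card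

/-- The welfare `W(a) = Σ_{r covered} v_r · w(|a|_r)`. -/
def welfare (G : RAGame n) (w : ℕ → ℝ) (a : G.Alloc) : ℝ :=
  ∑ r ∈ Finset.univ.filter (fun r => 0 < G.count a r), G.v r * w (G.count a r)

/-- Agent `i`'s utility `U_i(a) = Σ_{r ∈ a_i} v_r · f(|a|_r)`. -/
def utility (G : RAGame n) (f : ℕ → ℝ) (a : G.Alloc) (i : Fin G.m) : ℝ :=
  ∑ r ∈ (a i).val, G.v r * f (G.count a r)

/-- Pure Nash equilibrium: no unilateral deviation improves an agent's utility. -/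
def IsNash (G : RAGame n) (f : ℕ → ℝ) (a : G.Alloc) : Prop :=
  ∀ (i : Fin G.m) (s : {s : Finset G.R // s ∈ G.A i}),
    G.utility f (Function.update a i s) i ≤ G.utility f a i

/-- The optimal welfare `max_{a ∈ A} W(a)`. -/
noncomputable def optVal (G : RAGame n) (w : ℕ → ℝ) : ℝ :=
  sSup { x : ℝ | ∃ a : G.Alloc, x = G.welfare w a }

/-- The worst equilibrium welfare `min_{a ∈ NE(G)} W(a)`. -/
noncomputable def worstNash (G : RAGame n) (f w : ℕ → ℝ) : ℝ :=
  sInf { x : ℝ | ∃ a : G.Alloc, G.IsNash f a ∧ x = G.welfare w a }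

end RAGame

/-- The price of anarchy `PoA(f,w,n)` over the class `G_{f,w}^n` of games with at
most `n` agents and strictly positive optimal welfare. -/
noncomputable def PoA (f w : ℕ → ℝ) (n : ℕ) : ℝ :=
  sInf { x : ℝ | ∃ G : RAGame n, 0 < G.optVal w ∧ x = G.worstNash f w / G.optVal w }

/-- The optimal mechanism for coverage problems:
`f*(j) = ((j−1)!/(e−1)) · (e − Σ_{i=0}^{j−1} 1/i!)`. -/
noncomputable def fstar (j : ℕ) : ℝ :=
  ((Nat.factorial (j - 1) : ℝ) / (Real.exp 1 - 1)) *
    (Real.exp 1 - ∑ i ∈ Finset.range j, 1 / (Nat.factorial i : ℝ))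

/-! ### Properties of the mechanism `f*` -/

lemma exp_one_sub_one_pos : 0 < Real.exp 1 - 1 := by
  have := Real.exp_one_gt_d9
  linarith

lemma fstar_one : fstar 1 = 1 := by
  have := exp_one_sub_one_pos
  simp [fstar]
  field_simp

lemma fstar_rec (j : ℕ) (hj : 1 ≤ j) :
    (j : ℝ) * fstar j - fstar (j + 1) = 1 / (Real.exp 1 - 1) := by
  obtain ⟨k, rfl⟩ : ∃ k, j = k + 1 := ⟨j - 1, by omega⟩
  have h := exp_one_sub_one_pos
  have hk : (Nat.factorial (k + 1) : ℝ) = (k + 1 : ℝ) * Nat.factorial k := by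
    rw [Nat.factorial_succ]; push_cast; ring
  have hk0 : (Nat.factorial (k + 1) : ℝ) ≠ 0 := by positivity
  have hs := Finset.sum_range_succ (fun i => 1 / (Nat.factorial i : ℝ)) (k + 1)
  simp only [fstar, Nat.add_sub_cancel, hs]
  field_simp
  push_cast
  rw [hk]
  ring

lemma fstar_nonneg (j : ℕ) : 0 ≤ fstar j := by
  have h := exp_one_sub_one_pos
  have h2 := Real.sum_le_exp_of_nonneg (x := 1) zero_le_one j
  simp only [one_pow] at h2
  exact mul_nonneg (by positivity) (by linarith)

lemma fstar_succ_le (j : ℕ) (hj : 1 ≤ j) : fstar (j + 1) ≤ fstar j := by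
  have hrec := fstar_rec j hj
  have h := exp_one_sub_one_pos
  -- By the recurrence it is enough to bound the tail of the exponential series.
  suffices hs : ((j : ℝ) - 1) * fstar j ≤ 1 / (Real.exp 1 - 1) by linarith
  have hb := Real.exp_bound (x := 1) (by simp) (n := j) (by omega)
  simp only [one_pow, abs_one, one_mul] at hb
  have hb' := (le_abs_self _).trans hb
  obtain ⟨k, rfl⟩ : ∃ k, j = k + 1 := ⟨j - 1, by omega⟩
  have hk : (Nat.factorial (k + 1) : ℝ) = (k + 1 : ℝ) * Nat.factorial k := by
    rw [Nat.factorial_succ]; push_cast; ring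
  have hk0 : (0 : ℝ) < Nat.factorial k := by positivity
  simp only [fstar, Nat.add_sub_cancel]
  set T := Real.exp 1 - ∑ i ∈ Finset.range (k + 1), 1 / (Nat.factorial i : ℝ)
  have hT : (k : ℝ) * Nat.factorial k * T ≤ 1 := by
    calc (k : ℝ) * Nat.factorial k * T
        ≤ k * Nat.factorial k * (((k + 1).succ : ℝ) / ((k + 1).factorial * (k + 1 : ℕ))) := by
          gcongr
      _ = (k * (k + 2) : ℝ) / (k + 1) ^ 2 := by
          rw [hk]; push_cast; field_simp; ring
      _ ≤ 1 := by
          rw [div_le_one (by positivity)]; nlinarith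
  push_cast
  calc ((k : ℝ) + 1 - 1) * (Nat.factorial k / (Real.exp 1 - 1) * T)
      = (k : ℝ) * Nat.factorial k * T / (Real.exp 1 - 1) := by ring
    _ ≤ 1 / (Real.exp 1 - 1) := by gcongr

lemma fstar_le_one (j : ℕ) (hj : 1 ≤ j) : fstar j ≤ 1 := by
  induction j, hj using Nat.le_induction with
  | base => rw [fstar_one]
  | succ j hj ih => exact (fstar_succ_le j hj).trans ih

/-- The smoothness estimate for one resource: at equilibrium it is used by `a + x` agents, in the
comparison allocation by `b + x` agents, where `x` counts the agents using it in both. -/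
lemma resource_bound (a x b : ℕ) :
    (a : ℝ) * fstar (a + x) - b * fstar (a + x + 1) ≤
      (Real.exp 1 / (Real.exp 1 - 1)) * (if 0 < a + x then 1 else 0)
        - (if 0 < b + x then 1 else 0) := by
  have h := exp_one_sub_one_pos
  have hC : Real.exp 1 / (Real.exp 1 - 1) = 1 + 1 / (Real.exp 1 - 1) := by field_simp; ring
  rcases Nat.eq_zero_or_pos (a + x) with h0 | h0
  · obtain ⟨rfl, rfl⟩ : a = 0 ∧ x = 0 := by omega
    rcases Nat.eq_zero_or_pos b with rfl | hb
    · simp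
    · have : (1 : ℝ) ≤ b := by exact_mod_cast hb
      simp [fstar_one, hb, this]
  · have hrec := fstar_rec (a + x) h0
    have hn := fstar_nonneg (a + x)
    have hn1 := fstar_nonneg (a + x + 1)
    have hle := fstar_succ_le (a + x) h0
    have hle1 := fstar_le_one (a + x + 1) (by omega)
    have hxr : (0 : ℝ) ≤ x := by positivity
    push_cast at hrec
    rw [if_pos h0, hC]
    rcases Nat.eq_zero_or_pos b with rfl | hb
    · rcases Nat.eq_zero_or_pos x with rfl | hx
      · simp at *
        linarith
      · have : (1 : ℝ) ≤ x := by exact_mod_cast hx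
        rw [if_pos (by omega)]
        push_cast
        nlinarith
    · have : (1 : ℝ) ≤ b := by exact_mod_cast hb
      rw [if_pos (by omega)]
      nlinarith

/-! ### Existence of equilibria -/

namespace RAGame

variable {n : ℕ}

instance (G : RAGame n) : Finite G.Alloc := by
  unfold Alloc; infer_instance

instance (G : RAGame n) : Nonempty G.Alloc :=
  ⟨fun i => ⟨(G.A_ne i).choose, (G.A_ne i).choose_spec⟩⟩

/-- The number of agents other than `i` selecting the resource `r`. -/
def others (G : RAGame n) (a : G.Alloc) (i : Fin G.m) (r : G.R) : ℕ :=
  (Finset.univ.filter fun j => j ≠ i ∧ r ∈ (a j).val).card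

lemma count_eq_others (G : RAGame n) (a : G.Alloc) (i : Fin G.m) (r : G.R) :
    G.count a r = G.others a i r + if r ∈ (a i).val then 1 else 0 := by
  unfold count others
  split_ifs with h
  · have : (Finset.univ.filter fun j => r ∈ (a j).val) =
        insert i (Finset.univ.filter fun j => j ≠ i ∧ r ∈ (a j).val) := by
      ext j
      by_cases hj : j = i
      · subst hj; simp [h]
      · simp [hj]
    rw [this, Finset.card_insert_of_notMem (by simp)]
  · rw [add_zero]
    congr 1
    ext j
    by_cases hj : j = i
    · subst hj; simp [h]
    · simp [hj]

/-- The allocation obtained from `a` when agent `i` deviates to `s`. This is the allocation appearing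
in `IsNash`, with its type given as `G.Alloc`. -/
def deviate (G : RAGame n) (a : G.Alloc) (i : Fin G.m)
    (s : {s : Finset G.R // s ∈ G.A i}) : G.Alloc := Function.update a i s

lemma deviate_self (G : RAGame n) (a : G.Alloc) (i : Fin G.m)
    (s : {s : Finset G.R // s ∈ G.A i}) : G.deviate a i s i = s := Function.update_self ..

lemma deviate_of_ne (G : RAGame n) (a : G.Alloc) (i : Fin G.m)
    (s : {s : Finset G.R // s ∈ G.A i}) {j : Fin G.m} (hj : j ≠ i) :
    G.deviate a i s j = a j := Function.update_of_ne hj ..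

lemma others_deviate (G : RAGame n) (a : G.Alloc) (i : Fin G.m)
    (s : {s : Finset G.R // s ∈ G.A i}) (r : G.R) :
    G.others (G.deviate a i s) i r = G.others a i r := by
  unfold others
  congr 1
  ext j
  by_cases hj : j = i
  · simp [hj]
  · simp [hj, deviate_of_ne]

lemma utility_eq (G : RAGame n) (f : ℕ → ℝ) (a : G.Alloc) (i : Fin G.m) :
    G.utility f a i = ∑ r ∈ (a i).val, G.v r * f (G.others a i r + 1) := by
  refine Finset.sum_congr rfl fun r hr => ?_
  rw [G.count_eq_others a i r, if_pos hr]

lemma utility_deviate (G : RAGame n) (f : ℕ → ℝ) (a : G.Alloc) (i : Fin G.m)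
    (s : {s : Finset G.R // s ∈ G.A i}) :
    G.utility f (G.deviate a i s) i =
      ∑ r ∈ s.val, G.v r * f (G.others a i r + 1) := by
  rw [utility_eq, deviate_self]
  simp only [others_deviate]

/-- Rosenthal's potential of an allocation. -/
def potential (G : RAGame n) (f : ℕ → ℝ) (a : G.Alloc) : ℝ :=
  ∑ r, G.v r * ∑ j ∈ Finset.range (G.count a r), f (j + 1)

/-- The potential is agent `i`'s utility plus a term that does not depend on the choice of `i`. -/
lemma potential_eq (G : RAGame n) (f : ℕ → ℝ) (a : G.Alloc) (i : Fin G.m) :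
    G.potential f a = ∑ r, G.v r * ∑ j ∈ Finset.range (G.others a i r), f (j + 1)
      + G.utility f a i := by
  have hu : G.utility f a i =
      ∑ r, if r ∈ (a i).val then G.v r * f (G.others a i r + 1) else 0 := by
    rw [utility_eq, Finset.sum_ite_mem, Finset.univ_inter]
  rw [hu, ← Finset.sum_add_distrib]
  refine Finset.sum_congr rfl fun r _ => ?_
  rw [G.count_eq_others a i r]
  split_ifs with h
  · rw [Finset.sum_range_succ, mul_add]
  · simp

lemma exists_nash (G : RAGame n) (f : ℕ → ℝ) : ∃ a : G.Alloc, G.IsNash f a := by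
  obtain ⟨a, ha⟩ := Finite.exists_max (G.potential f)
  refine ⟨a, fun i s => ?_⟩
  change G.utility f (G.deviate a i s) i ≤ _
  have h := ha (G.deviate a i s)
  rw [potential_eq _ _ _ i, potential_eq _ _ a i] at h
  simp only [others_deviate] at h
  linarith

/-! ### The lower bound -/

lemma welfare_one_eq (G : RAGame n) (a : G.Alloc) :
    G.welfare (fun _ => 1) a = ∑ r, G.v r * if 0 < G.count a r then 1 else 0 := by
  simp [welfare, Finset.sum_filter]

lemma welfare_one_nonneg (G : RAGame n) (a : G.Alloc) : 0 ≤ G.welfare (fun _ => 1) a :=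
  Finset.sum_nonneg fun r _ => by simpa using G.v_nonneg r

lemma bddAbove_welfare (G : RAGame n) (w : ℕ → ℝ) :
    BddAbove { x : ℝ | ∃ a : G.Alloc, x = G.welfare w a } := by
  have : { x : ℝ | ∃ a : G.Alloc, x = G.welfare w a } = Set.range (G.welfare w) := by
    ext x; simp [eq_comm]
  rw [this]
  exact (Set.finite_range _).bddAbove

lemma worstNash_nonneg (G : RAGame n) (f : ℕ → ℝ) : 0 ≤ G.worstNash f (fun _ => 1) := by
  refine Real.sInf_nonneg ?_
  rintro x ⟨a, -, rfl⟩
  exact G.welfare_one_nonneg a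

lemma worstNash_le (G : RAGame n) (f : ℕ → ℝ) (a : G.Alloc) (ha : G.IsNash f a) :
    G.worstNash f (fun _ => 1) ≤ G.welfare (fun _ => 1) a := by
  refine csInf_le ⟨0, ?_⟩ ⟨a, ha, rfl⟩
  rintro x ⟨b, -, rfl⟩
  exact G.welfare_one_nonneg b

/-- The contribution of the resource `r` to the sum over all agents of
`U_i(a) - U_i(o_i, a_{-i})`. -/
lemma sum_resource_le (G : RAGame n) (a o : G.Alloc) (r : G.R) :
    ∑ i, ((if r ∈ (a i).val then fstar (G.others a i r + 1) else 0)
        - (if r ∈ (o i).val then fstar (G.others a i r + 1) else 0)) ≤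
      (Real.exp 1 / (Real.exp 1 - 1)) * (if 0 < G.count a r then 1 else 0)
        - (if 0 < G.count o r then 1 else 0) := by
  classical
  set P := Finset.univ.filter fun i => r ∈ (a i).val with hP
  set Q := Finset.univ.filter fun i => r ∈ (o i).val with hQ
  have hcP : G.count a r = (P \ Q).card + (P ∩ Q).card :=
    (Finset.card_sdiff_add_card_inter P Q).symm
  have hcQ : G.count o r = (Q \ P).card + (P ∩ Q).card := by
    rw [Finset.inter_comm]
    exact (Finset.card_sdiff_add_card_inter Q P).symm
  have hb := resource_bound (P \ Q).card (P ∩ Q).card (Q \ P).card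
  rw [← hcP, ← hcQ] at hb
  refine le_trans (le_of_eq ?_) hb
  have hsum : ∀ (S : Finset (Fin G.m)) (c : ℝ),
      (S.card : ℝ) * c = ∑ i, if i ∈ S then c else 0 := by
    intro S c
    simp
  rw [hsum, hsum, ← Finset.sum_sub_distrib]
  refine Finset.sum_congr rfl fun i _ => ?_
  have hc := G.count_eq_others a i r
  by_cases h1 : r ∈ (a i).val <;> by_cases h2 : r ∈ (o i).val <;>
    simp [hP, hQ, h1, h2] at hc ⊢ <;> rw [hc]

lemma welfare_le_of_nash (G : RAGame n) (a o : G.Alloc) (ha : G.IsNash fstar a) :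
    G.welfare (fun _ => 1) o ≤
      (Real.exp 1 / (Real.exp 1 - 1)) * G.welfare (fun _ => 1) a := by
  have hN : 0 ≤ ∑ i, (G.utility fstar a i - G.utility fstar (G.deviate a i (o i)) i) :=
    Finset.sum_nonneg fun i _ => sub_nonneg.2 (ha i (o i))
  have hE : ∑ i, (G.utility fstar a i - G.utility fstar (G.deviate a i (o i)) i) =
      ∑ r, G.v r * ∑ i, ((if r ∈ (a i).val then fstar (G.others a i r + 1) else 0)
        - (if r ∈ (o i).val then fstar (G.others a i r + 1) else 0)) := by
    simp only [Finset.mul_sum]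
    rw [Finset.sum_comm]
    refine Finset.sum_congr rfl fun i _ => ?_
    rw [utility_deviate, utility_eq]
    simp only [mul_sub, Finset.sum_sub_distrib, mul_ite, mul_zero, Finset.sum_ite_mem,
      Finset.univ_inter]
  have hB : ∑ r, G.v r * ∑ i, ((if r ∈ (a i).val then fstar (G.others a i r + 1) else 0)
        - (if r ∈ (o i).val then fstar (G.others a i r + 1) else 0)) ≤
      ∑ r, G.v r * ((Real.exp 1 / (Real.exp 1 - 1)) * (if 0 < G.count a r then 1 else 0)
        - (if 0 < G.count o r then 1 else 0)) :=
    Finset.sum_le_sum fun r _ =>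
      mul_le_mul_of_nonneg_left (G.sum_resource_le a o r) (G.v_nonneg r)
  rw [← hE] at hB
  have hS := hN.trans hB
  simp only [mul_sub, Finset.sum_sub_distrib] at hS
  rw [welfare_one_eq, welfare_one_eq, Finset.mul_sum]
  simp only [mul_left_comm (Real.exp 1 / (Real.exp 1 - 1))]
  linarith

lemma ratio_ge (G : RAGame n) (h : 0 < G.optVal (fun _ => 1)) :
    1 - 1 / Real.exp 1 ≤ G.worstNash fstar (fun _ => 1) / G.optVal (fun _ => 1) := by
  have he := Real.exp_pos 1
  have he1 := exp_one_sub_one_pos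
  rw [le_div_iff₀ h]
  obtain ⟨a₀, ha₀⟩ := G.exists_nash fstar
  refine le_csInf ⟨_, a₀, ha₀, rfl⟩ ?_
  rintro x ⟨a, ha, rfl⟩
  have hopt : G.optVal (fun _ => 1) ≤
      (Real.exp 1 / (Real.exp 1 - 1)) * G.welfare (fun _ => 1) a := by
    refine csSup_le ⟨_, a₀, rfl⟩ ?_
    rintro y ⟨o, rfl⟩
    exact G.welfare_le_of_nash a o ha
  have hc : 1 - 1 / Real.exp 1 = (Real.exp 1 - 1) / Real.exp 1 := by field_simp
  rw [hc]
  calc (Real.exp 1 - 1) / Real.exp 1 * G.optVal (fun _ => 1)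
      ≤ (Real.exp 1 - 1) / Real.exp 1 *
        ((Real.exp 1 / (Real.exp 1 - 1)) * G.welfare (fun _ => 1) a) := by gcongr
    _ = G.welfare (fun _ => 1) a := by field_simp

end RAGame

/-! ### Games with bad equilibria -/

/-- All unit-value resources except the one belonging to agent `i`. -/
def crossOthers {k : ℕ} (i : Fin k) : Finset (Fin k × Bool) :=
  Finset.univ.filter fun r => r.2 = true ∧ r.1 ≠ i

/-- The unit-value resource and the private resource belonging to agent `i`. -/
def crossOwn {k : ℕ} (i : Fin k) : Finset (Fin k × Bool) :=
  {(i, true), (i, false)}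

/-- The game with `k` agents in which agent `i` owns a resource `(i, true)` of value `1` and a
resource `(i, false)` of value `c`, and chooses between both of its own resources and
all the unit-value resources of the other agents. -/
def crossGame {n : ℕ} (k : ℕ) (hk : k ≤ n) (c : ℝ) (hc : 0 ≤ c) : RAGame n where
  R := Fin k × Bool
  v r := if r.2 then 1 else c
  v_nonneg r := by split_ifs <;> linarith
  m := k
  m_le := hk
  A i := {crossOthers i, crossOwn i}
  A_ne i := by simp

section crossGame

variable {n k : ℕ} (hk : k ≤ n) (c : ℝ) (hc : 0 ≤ c)

/-- The allocation in which every agent uses the resources of the others. -/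
def crossBad : (crossGame k hk c hc).Alloc :=
  fun i => ⟨crossOthers i, Finset.mem_insert_self _ _⟩

/-- The allocation in which every agent uses its own resources. -/
def crossGood : (crossGame k hk c hc).Alloc :=
  fun i => ⟨crossOwn i, Finset.mem_insert_of_mem (Finset.mem_singleton_self _)⟩

lemma crossGood_welfare :
    (crossGame k hk c hc).welfare (fun _ => 1) (crossGood hk c hc) = k * (1 + c) := by
  have hcount : ∀ r, 0 < (crossGame k hk c hc).count (crossGood hk c hc) r := by
    rintro ⟨i, b⟩
    change 0 < (Finset.univ.filter fun l : Fin k => (i, b) ∈ crossOwn l).card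
    refine Finset.card_pos.2 ⟨i, ?_⟩
    cases b <;> simp [crossOwn]
  rw [RAGame.welfare_one_eq]
  simp only [hcount, if_true, mul_one]
  change ∑ r : Fin k × Bool, (if r.2 then 1 else c) = _
  rw [Fintype.sum_prod_type]
  simp
  ring

lemma crossBad_welfare :
    (crossGame k hk c hc).welfare (fun _ => 1) (crossBad hk c hc) ≤ k := by
  rw [RAGame.welfare_one_eq]
  change ∑ r : Fin k × Bool, (if r.2 then 1 else c) *
    (if 0 < (Finset.univ.filter fun l : Fin k => r ∈ crossOthers l).card
      then (1 : ℝ) else 0) ≤ _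
  rw [Fintype.sum_prod_type]
  calc _ ≤ ∑ _i : Fin k, (1 : ℝ) := by
        refine Finset.sum_le_sum fun i _ => ?_
        have hfalse :
            (Finset.univ.filter fun l : Fin k => (i, false) ∈ crossOthers l).card = 0 := by
          simp [crossOthers]
        rw [Fintype.sum_bool, hfalse]
        simp only [if_true, lt_irrefl, if_false, mul_zero, add_zero, one_mul]
        split_ifs <;> norm_num
    _ = k := by simp

/-- The number of agents other than `i` using the resource `r` in the allocation `crossBad`. -/
def crossCount (i : Fin k) (r : Fin k × Bool) : ℕ :=
  (Finset.univ.filter fun l => l ≠ i ∧ r ∈ crossOthers l).card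

lemma crossCount_true (i j : Fin k) :
    crossCount i (j, true) = if j = i then k - 1 else k - 2 := by
  have h : crossCount i (j, true) = (({i, j} : Finset (Fin k))ᶜ).card := by
    unfold crossCount
    congr 1
    ext l
    simp [crossOthers, eq_comm (a := j)]
  rw [h, Finset.card_compl, Fintype.card_fin]
  split_ifs with hij
  · simp [hij]
  · rw [Finset.card_pair (Ne.symm hij)]

lemma crossCount_false (i j : Fin k) : crossCount i (j, false) = 0 := by
  simp [crossCount, crossOthers]

lemma card_crossOthers (i : Fin k) : (crossOthers i).card = k - 1 := by
  have : crossOthers i = (({i} : Finset (Fin k))ᶜ) ×ˢ {true} := by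
    ext ⟨j, b⟩
    simp only [crossOthers, Finset.mem_filter, Finset.mem_univ, true_and, Finset.mem_product,
      Finset.mem_compl, Finset.mem_singleton]
    exact and_comm
  rw [this, Finset.card_product, Finset.card_compl]
  simp

lemma crossBad_isNash (f : ℕ → ℝ) (hk2 : 2 ≤ k)
    (hf : f k + c * f 1 ≤ (k - 1 : ℝ) * f (k - 1)) :
    (crossGame k hk c hc).IsNash f (crossBad hk c hc) := by
  intro i s
  change (crossGame k hk c hc).utility f ((crossGame k hk c hc).deviate _ i s) i ≤ _
  rw [RAGame.utility_deviate, RAGame.utility_eq]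
  have hs : s.val = crossOthers i ∨ s.val = crossOwn i :=
    (Finset.mem_insert.1 s.2).imp id Finset.mem_singleton.1
  rcases hs with hs | hs
  · rw [hs]
    exact le_rfl
  · rw [hs]
    have key : ∀ i : Fin k,
        ∑ r ∈ crossOwn i, (if r.2 then 1 else c) * f (crossCount i r + 1) ≤
          ∑ r ∈ crossOthers i, (if r.2 then 1 else c) * f (crossCount i r + 1) := by
      intro i
      have hconst : ∀ r ∈ crossOthers i,
          (if r.2 then 1 else c) * f (crossCount i r + 1) = f (k - 1) := by
        rintro ⟨j, b⟩ hr
        simp only [crossOthers, Finset.mem_filter, Finset.mem_univ, true_and] at hr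
        obtain ⟨rfl, hj⟩ := hr
        rw [crossCount_true, if_neg hj, show k - 2 + 1 = k - 1 by omega]
        simp
      rw [Finset.sum_congr rfl hconst, Finset.sum_const, nsmul_eq_mul, card_crossOthers,
        Nat.cast_sub (by omega)]
      unfold crossOwn
      rw [Finset.sum_pair (by simp), crossCount_true, crossCount_false, if_pos (rfl : i = i),
        show k - 1 + 1 = k by omega]
      simpa using hf
    exact key i

lemma crossGame_optVal : k * (1 + c) ≤ (crossGame k hk c hc).optVal (fun _ => 1) := by
  rw [← crossGood_welfare hk c hc]
  exact le_csSup (RAGame.bddAbove_welfare _ _) ⟨_, rfl⟩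

end crossGame

/-! ### The price of anarchy -/

lemma ratio_nonneg (f : ℕ → ℝ) (n : ℕ) (x : ℝ)
    (hx : ∃ G : RAGame n, 0 < G.optVal (fun _ => 1) ∧
      x = G.worstNash f (fun _ => 1) / G.optVal (fun _ => 1)) : 0 ≤ x := by
  obtain ⟨G, hG, rfl⟩ := hx
  exact div_nonneg (G.worstNash_nonneg f) hG.le

lemma PoA_nonneg (f : ℕ → ℝ) (n : ℕ) : 0 ≤ PoA f (fun _ => 1) n :=
  Real.sInf_nonneg fun x hx => ratio_nonneg f n x hx

lemma PoA_le (f : ℕ → ℝ) (k : ℕ) (hk2 : 2 ≤ k) (c : ℝ) (hc : 0 ≤ c)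
    (hf : f k + c * f 1 ≤ (k - 1 : ℝ) * f (k - 1)) :
    PoA f (fun _ => 1) k ≤ 1 / (1 + c) := by
  have hk0 : (0 : ℝ) < k := by exact_mod_cast (by omega : 0 < k)
  have hopt := crossGame_optVal (le_refl k) c hc
  have hpos : 0 < (k : ℝ) * (1 + c) := by positivity
  have hw := (RAGame.worstNash_le _ f _ (crossBad_isNash (le_refl k) c hc f hk2 hf)).trans
    (crossBad_welfare (le_refl k) c hc)
  refine (csInf_le ⟨0, fun x hx => ratio_nonneg f k x hx⟩
    ⟨crossGame k le_rfl c hc, hpos.trans_le hopt, rfl⟩).trans ?_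
  calc _ ≤ (k : ℝ) / (k * (1 + c)) := by gcongr
    _ = 1 / (1 + c) := by field_simp

lemma PoA_fstar_ge (n : ℕ) (hn : 1 ≤ n) : 1 - 1 / Real.exp 1 ≤ PoA fstar (fun _ => 1) n := by
  have hopt := crossGame_optVal hn 0 le_rfl
  refine le_csInf ⟨_, crossGame 1 hn 0 le_rfl, lt_of_lt_of_le (by norm_num) hopt, rfl⟩ ?_
  rintro x ⟨G, hG, rfl⟩
  exact G.ratio_ge hG

lemma sInf_PoA_le (f : ℕ → ℝ) (n : ℕ) (hn : 1 ≤ n) :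
    sInf { x : ℝ | ∃ n : ℕ, 1 ≤ n ∧ x = PoA f (fun _ => (1 : ℝ)) n } ≤ PoA f (fun _ => 1) n := by
  refine csInf_le ⟨0, ?_⟩ ⟨n, hn, rfl⟩
  rintro x ⟨l, -, rfl⟩
  exact PoA_nonneg f l

/-- Theorem 1(iii), second part: for the constant welfare basis `w ≡ 1`, the
mechanism `f*` has price of anarchy `1 − 1/e` over games with arbitrarily many
agents; in particular its price of anarchy is strictly larger than that of the
budget-balanced equal-share mechanism `f^{es}(j) = 1/j`, which equals `1/2`. -/
theorem poa_fstar_coverage :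
    sInf { x : ℝ | ∃ n : ℕ, 1 ≤ n ∧ x = PoA fstar (fun _ => (1 : ℝ)) n } =
      1 - 1 / Real.exp 1 ∧
    sInf { x : ℝ | ∃ n : ℕ, 1 ≤ n ∧
        x = PoA (fun j => 1 / (j : ℝ)) (fun _ => (1 : ℝ)) n } <
      sInf { x : ℝ | ∃ n : ℕ, 1 ≤ n ∧ x = PoA fstar (fun _ => (1 : ℝ)) n } := by
  have he := Real.exp_one_gt_d9
  have he1 := exp_one_sub_one_pos
  have hmain : sInf { x : ℝ | ∃ n : ℕ, 1 ≤ n ∧ x = PoA fstar (fun _ => (1 : ℝ)) n } =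
      1 - 1 / Real.exp 1 := by
    apply le_antisymm
    · refine (sInf_PoA_le fstar 2 (by norm_num)).trans ?_
      have hrec := fstar_rec 1 le_rfl
      rw [fstar_one] at hrec
      refine (PoA_le fstar 2 le_rfl (1 / (Real.exp 1 - 1)) (by positivity) ?_).trans
        (le_of_eq ?_)
      · norm_num [fstar_one] at hrec ⊢
        linarith
      · field_simp
        ring
    · refine le_csInf ⟨_, 1, le_rfl, rfl⟩ ?_
      rintro x ⟨n, hn, rfl⟩
      exact PoA_fstar_ge n hn
  refine ⟨hmain, ?_⟩
  rw [hmain]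
  refine (sInf_PoA_le _ 3 (by norm_num)).trans_lt ?_
  refine (PoA_le _ 3 (by norm_num) (2 / 3) (by norm_num) (by norm_num)).trans_lt ?_
  rw [lt_sub_iff_add_lt, ← lt_sub_iff_add_lt', div_lt_iff₀ (by positivity)]
  linarith
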